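/- There exist real numbers r₁, r₂ with 0 < r₁ < r₂ < 1 such that h(r₁) = h(r₂) = 0, and every r > 0 with h(r) = 0 equals r₁ or r₂. In other words, h has exactly two zeros in (0,∞), and both lie in the open interval (0,1). -/

import Mathlib

open MeasureTheory Real Filter

/-- `u r z = √(z(1−rz)/(z+r))`, the real branch of `|w_r|` on `(0, 1/r)`. -/
noncomputable def u (r z : ℝ) : ℝ := Real.sqrt (z * (1 - r * z) / (z + r))

/-- The period function `h` of the candidate maximal Klein bottles. -/
noncomputable def h (r : ℝ) : ℝ :=
  ∫ z in (0:ℝ)..(1/r),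
    -2 * u r z * (-1 + z + r * (2 - 3 * z + r * (-4 + 4 * r + 3 * z))) / (r + z)

/-- `A₁ r = ∫₀^{1/r} u_r(z) dz`. -/
noncomputable def A₁ (r : ℝ) : ℝ := ∫ z in (0:ℝ)..(1/r), u r z

/-- `A₂ r = ∫₀^{1/r} u_r(z)/(z+r) dz`. -/
noncomputable def A₂ (r : ℝ) : ℝ := ∫ z in (0:ℝ)..(1/r), u r z / (z + r)


/-- Scaled integrand. -/
noncomputable def Jf (a s t : ℝ) : ℝ := Real.sqrt (t * (1 - t)) * (t + s) ^ (-a)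

/-- Scaled integrals. -/
noncomputable def If (a s : ℝ) : ℝ := ∫ t in (0:ℝ)..1, Jf a s t

lemma Jf_cont (a s : ℝ) (hs : 0 < s) : ContinuousOn (Jf a s) (Set.Icc 0 1) := by
  unfold Jf
  apply ContinuousOn.mul
  · fun_prop
  · apply ContinuousOn.rpow_const
    · fun_prop
    · intro x hx
      left
      have := hx.1
      positivity

lemma Jf_int (a s : ℝ) (hs : 0 < s) : IntervalIntegrable (Jf a s) volume 0 1 := by
  apply ContinuousOn.intervalIntegrable
  rw [Set.uIcc_of_le zero_le_one]
  exact Jf_cont a s hs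

lemma If_pos (a s : ℝ) (hs : 0 < s) : 0 < If a s := by
  apply intervalIntegral.intervalIntegral_pos_of_pos_on (Jf_int a s hs) _ zero_lt_one
  intro t ht
  have h1 : 0 < t * (1 - t) := mul_pos ht.1 (by linarith [ht.2])
  have h2 : 0 < t + s := by linarith [ht.1]
  unfold Jf
  positivity

lemma If_deriv (a s : ℝ) (hs : 0 < s) (ha : 0 < a) : HasDerivAt (If a) (-a * If (a + 1) s) s := by
  have key := intervalIntegral.hasDerivAt_integral_of_dominated_loc_of_deriv_le
    (μ := volume) (𝕜 := ℝ) (F := fun s t => Jf a s t) (F' := fun s t => -a * Jf (a + 1) s t) (x₀ := s)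
    (s := Set.Ioi (s / 2)) (a := 0) (b := 1) (bound := fun _ => a * (s / 2) ^ (-(a + 1)))
    (Ioi_mem_nhds (by linarith)) ?_ (Jf_int a s hs) ?_ ?_ ?_ ?_
  · have := key.2
    rw [intervalIntegral.integral_const_mul] at this
    exact this
  · filter_upwards [Ioi_mem_nhds hs] with x hx
    exact (Jf_int a x hx).aestronglyMeasurable_restrict_uIoc
  · exact ((Jf_int (a + 1) s hs).const_mul (-a)).aestronglyMeasurable_restrict_uIoc
  · filter_upwards with t ht x hx
    rw [Set.uIoc_of_le zero_le_one] at ht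
    have hx' : s / 2 < x := hx
    have h0 : 0 < t := ht.1
    have h1 : Real.sqrt (t * (1 - t)) ≤ 1 := by
      apply Real.sqrt_le_iff.2
      constructor
      · norm_num
      · nlinarith [ht.2, sq_nonneg t]
    have h2 : (t + x) ^ (-(a + 1)) ≤ (s / 2) ^ (-(a + 1)) :=
      Real.rpow_le_rpow_of_nonpos (by positivity) (by linarith) (by linarith)
    have h3 : 0 ≤ (t + x) ^ (-(a + 1)) := Real.rpow_nonneg (by linarith) _
    unfold Jf
    rw [norm_mul, norm_neg, Real.norm_of_nonneg ha.le,
      Real.norm_of_nonneg (mul_nonneg (Real.sqrt_nonneg _) h3)]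
    apply mul_le_mul_of_nonneg_left _ ha.le
    calc _ ≤ 1 * (t + x) ^ (-(a + 1)) := mul_le_mul_of_nonneg_right h1 h3
      _ ≤ _ := by rw [one_mul]; exact h2
  · exact intervalIntegrable_const
  · filter_upwards with t ht x hx
    rw [Set.uIoc_of_le zero_le_one] at ht
    have hx' : s / 2 < x := hx
    have h0 : 0 < t := ht.1
    unfold Jf
    have hd : HasDerivAt (fun x : ℝ => t + x) 1 x := (hasDerivAt_id x).const_add t
    have := (hd.rpow_const (p := -a) (Or.inl (by linarith))).const_mul (Real.sqrt (t * (1 - t)))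
    refine this.congr_deriv ?_
    rw [show -a - 1 = -(a + 1) by ring]
    ring

lemma Jf_succ (a s t : ℝ) (h : 0 < t + s) : Jf (a + 1) s t * (t + s) = Jf a s t := by
  unfold Jf
  rw [show -a = -(a + 1) + 1 by ring, Real.rpow_add_one h.ne']
  ring

lemma If_rec (s : ℝ) (hs : 0 < s) : s * (1 + s) * If (5 / 2) s = If (1 / 2) s := by
  have key := intervalIntegral.integral_eq_sub_of_hasDerivAt_of_le (a := 0) (b := 1) zero_le_one
    (f := fun t => t * (1 - t) * Jf (3 / 2) s t)
    (f' := fun t => 3 / 2 * (s * (1 + s) * Jf (5 / 2) s t - Jf (1 / 2) s t))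
    (ContinuousOn.mul (by fun_prop) (Jf_cont _ s hs)) ?_ ?_
  · rw [intervalIntegral.integral_const_mul, intervalIntegral.integral_sub
      ((Jf_int _ s hs).const_mul _) (Jf_int _ s hs), intervalIntegral.integral_const_mul] at key
    simp only [sub_self, mul_zero, zero_mul] at key
    unfold If
    linarith
  · intro t ht
    have h1 : 0 < t * (1 - t) := mul_pos ht.1 (by linarith [ht.2])
    have h2 : 0 < t + s := by linarith [ht.1]
    have e1 : HasDerivAt (fun t : ℝ => t * (1 - t)) (1 - 2 * t) t := by
      have := (hasDerivAt_id t).mul ((hasDerivAt_id t).const_sub 1)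
      refine this.congr_deriv ?_
      simp; ring
    have e2 : HasDerivAt (fun t : ℝ => t + s) 1 t := (hasDerivAt_id t).add_const s
    have e3 := e1.mul ((e1.sqrt h1.ne').mul (e2.rpow_const (p := -(3 / 2 : ℝ)) (Or.inl h2.ne')))
    refine e3.congr_deriv ?_
    have q1 := Jf_succ (1 / 2) s t h2
    have q2 := Jf_succ (3 / 2) s t h2
    norm_num at q1 q2
    rw [← q1, ← q2]
    have q3 : (t + s) ^ (-(3 / 2 : ℝ)) = (t + s) ^ (-(5 / 2 : ℝ)) * (t + s) := by
      rw [← Real.rpow_add_one h2.ne']; norm_num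
    have q4 : (-(3 / 2) - 1 : ℝ) = -(5 / 2) := by norm_num
    simp only [Pi.mul_apply]
    rw [q4, q3]
    unfold Jf
    have hq := Real.sq_sqrt h1.le
    have hq0 := (Real.sqrt_pos.2 h1).ne'
    generalize (t + s) ^ (-(5 / 2 : ℝ)) = p
    generalize Real.sqrt (t * (1 - t)) = w at *
    rw [← hq]
    field_simp
    have hw : w ^ 2 = t - t ^ 2 := by rw [hq]; ring
    rw [hw]
    ring
  · exact (((Jf_int _ s hs).const_mul _).sub (Jf_int _ s hs)).const_mul _

lemma h_eq (r : ℝ) (hr : 0 < r) :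
    h r = 2 / r * (r * ((1 - r) * (1 + r ^ 2)) * If (3 / 2) (r ^ 2)
      - (1 - 3 * r + 3 * r ^ 2) * If (1 / 2) (r ^ 2)) := by
  have hs : 0 < r ^ 2 := by positivity
  have e1 := intervalIntegral.integral_comp_div (a := 0) (b := 1) (c := r) (fun z : ℝ =>
    -2 * u r z * (-1 + z + r * (2 - 3 * z + r * (-4 + 4 * r + 3 * z))) / (r + z)) hr.ne'
  rw [zero_div] at e1
  change _ = r • h r at e1
  have e2 : r * h r = ∫ t in (0:ℝ)..1, (2 * (r * ((1 - r) * (1 + r ^ 2))) * Jf (3 / 2) (r ^ 2) t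
      - 2 * (1 - 3 * r + 3 * r ^ 2) * Jf (1 / 2) (r ^ 2) t) := by
    rw [← smul_eq_mul, ← e1]
    apply intervalIntegral.integral_congr
    intro t ht
    rw [Set.uIcc_of_le zero_le_one] at ht
    have h2 : 0 < t + r ^ 2 := by linarith [ht.1]
    have h3 : u r (t / r) = Jf (1 / 2) (r ^ 2) t := by
      unfold u Jf
      rw [Real.rpow_neg h2.le, ← Real.sqrt_eq_rpow, ← div_eq_mul_inv,
        ← Real.sqrt_div (mul_nonneg ht.1 (by linarith [ht.2]))]
      congr 1
      field_simp
    have q1 := Jf_succ (1 / 2) (r ^ 2) t h2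
    norm_num at q1
    have h4 : r ^ 2 + t ≠ 0 := by linarith
    have h5 : r + t / r ≠ 0 := by
      have := div_nonneg ht.1 hr.le
      linarith
    simp only [h3]
    norm_num
    rw [← q1]
    generalize Jf (3 / 2) (r ^ 2) t = p
    have h6 : r + t / r = (r ^ 2 + t) / r := by field_simp
    rw [h6]
    field_simp
    ring
  rw [intervalIntegral.integral_sub ((Jf_int _ _ hs).const_mul _) ((Jf_int _ _ hs).const_mul _),
    intervalIntegral.integral_const_mul, intervalIntegral.integral_const_mul] at e2
  unfold If
  field_simp
  linarith

/-- Logarithm of the integrating factor. -/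
noncomputable def Lf (r : ℝ) : ℝ :=
  -(1 / 2) * Real.log (1 - r) - 5 / 4 * Real.log (1 + r ^ 2) + 1 / 2 * Real.arctan r

/-- The unimodal function. -/
noncomputable def Wf (r : ℝ) : ℝ :=
  (If (3 / 2) (r ^ 2) - (1 - 3 * r + 3 * r ^ 2) / (r * ((1 - r) * (1 + r ^ 2))) * If (1 / 2) (r ^ 2))
    * Real.exp (-Lf r)

lemma h_W (r : ℝ) (hr : 0 < r) (hr1 : r < 1) :
    h r = 2 * ((1 - r) * (1 + r ^ 2)) * Real.exp (Lf r) * Wf r := by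
  have h1 : 0 < 1 - r := by linarith
  have h2 : 0 < 1 + r ^ 2 := by positivity
  rw [h_eq r hr]
  unfold Wf
  rw [Real.exp_neg]
  have := Real.exp_ne_zero (Lf r)
  field_simp

lemma Lf_deriv (r : ℝ) (hr1 : r < 1) :
    HasDerivAt Lf ((1 - 3 * r + 3 * r ^ 2) / ((1 - r) * (1 + r ^ 2))) r := by
  have h1 : 0 < 1 - r := by linarith
  have h2 : 0 < 1 + r ^ 2 := by positivity
  have a1 := (((hasDerivAt_id r).const_sub 1).log h1.ne').const_mul (-(1 / 2 : ℝ))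
  have a2 := (((hasDerivAt_pow 2 r).const_add 1).log h2.ne').const_mul (5 / 4 : ℝ)
  have a3 := (Real.hasDerivAt_arctan r).const_mul (1 / 2 : ℝ)
  refine ((a1.sub a2).add a3).congr_deriv ?_
  simp only [id]
  field_simp
  norm_num
  ring

lemma W_deriv (r : ℝ) (hr : 0 < r) (hr1 : r < 1) :
    HasDerivAt Wf (If (1 / 2) (r ^ 2) * (1 - 4 * r + 3 * r ^ 2 - r ^ 3)
      / (r * ((1 - r) * (1 + r ^ 2))) ^ 2 * Real.exp (-Lf r)) r := by
  have h1 : 0 < 1 - r := by linarith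
  have h2 : 0 < 1 + r ^ 2 := by positivity
  have hs : 0 < r ^ 2 := by positivity
  have b1 : HasDerivAt (fun r : ℝ => If (1 / 2) (r ^ 2)) (-r * If (3 / 2) (r ^ 2)) r := by
    have := HasDerivAt.comp (h := fun x : ℝ => x ^ 2) r
      (If_deriv (1 / 2) (r ^ 2) hs (by norm_num)) (hasDerivAt_pow 2 r)
    refine this.congr_deriv ?_
    norm_num
    ring
  have b2 : HasDerivAt (fun r : ℝ => If (3 / 2) (r ^ 2))
      (-3 * If (1 / 2) (r ^ 2) / (r * (1 + r ^ 2))) r := by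
    have := HasDerivAt.comp (h := fun x : ℝ => x ^ 2) r
      (If_deriv (3 / 2) (r ^ 2) hs (by norm_num)) (hasDerivAt_pow 2 r)
    refine this.congr_deriv ?_
    rw [← If_rec _ hs]
    norm_num
    field_simp
  have b3 : HasDerivAt (fun r : ℝ => 1 - 3 * r + 3 * r ^ 2) (-3 + 6 * r) r := by
    have := (((hasDerivAt_id r).const_mul 3).const_sub 1).add ((hasDerivAt_pow 2 r).const_mul 3)
    refine this.congr_deriv ?_
    norm_num
    ring
  have b4 : HasDerivAt (fun r : ℝ => r * ((1 - r) * (1 + r ^ 2)))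
      (1 - 2 * r + 3 * r ^ 2 - 4 * r ^ 3) r := by
    have := (hasDerivAt_id r).mul
      (((hasDerivAt_id r).const_sub 1).mul ((hasDerivAt_pow 2 r).const_add 1))
    refine this.congr_deriv ?_
    norm_num
    ring
  have hne : r * ((1 - r) * (1 + r ^ 2)) ≠ 0 := by positivity
  have b5 := (b2.sub ((b3.div b4 hne).mul b1)).mul (Lf_deriv r hr1).neg.exp
  refine b5.congr_deriv ?_
  simp only [Pi.mul_apply, Pi.sub_apply, Pi.div_apply, Pi.neg_apply]
  generalize If (1 / 2) (r ^ 2) = x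
  generalize If (3 / 2) (r ^ 2) = y
  generalize Real.exp (-Lf r) = e
  field_simp
  ring

lemma rolle (a b : ℝ) (ha : 0 < a) (hab : a < b) (hb : b < 1) (h1 : Wf a = 0) (h2 : Wf b = 0) :
    ∃ c, a < c ∧ c < b ∧ 1 - 4 * c + 3 * c ^ 2 - c ^ 3 = 0 := by
  obtain ⟨c, hc, hd⟩ := exists_hasDerivAt_eq_zero hab
    (fun x hx => (W_deriv x (by linarith [hx.1]) (by linarith [hx.2])).continuousAt.continuousWithinAt)
    (h1.trans h2.symm) (fun x hx => W_deriv x (by linarith [hx.1]) (by linarith [hx.2]))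
  refine ⟨c, hc.1, hc.2, ?_⟩
  have hc0 : 0 < c := by linarith [hc.1]
  have hc1 : 0 < 1 - c := by linarith [hc.2]
  have hI := If_pos (1 / 2) (c ^ 2) (by positivity)
  have := Real.exp_pos (-Lf c)
  have hq : (c * ((1 - c) * (1 + c ^ 2))) ^ 2 ≠ 0 := by positivity
  rcases mul_eq_zero.1 hd with h3 | h3
  · rcases div_eq_zero_iff.1 h3 with h4 | h4
    · exact (mul_eq_zero.1 h4).resolve_left hI.ne'
    · exact absurd h4 hq
  · exact absurd h3 this.ne'

lemma no_three (a b c : ℝ) (ha : 0 < a) (hab : a < b) (hbc : b < c) (hc : c < 1)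
    (h1 : Wf a = 0) (h2 : Wf b = 0) (h3 : Wf c = 0) : False := by
  obtain ⟨x, hx1, hx2, hx⟩ := rolle a b ha hab (by linarith) h1 h2
  obtain ⟨y, hy1, hy2, hy⟩ := rolle b c (by linarith) hbc hc h2 h3
  have : (y - x) * (4 - 3 * (x + y) + (x ^ 2 + x * y + y ^ 2)) = 0 := by linarith
  have h4 : 0 < 4 - 3 * (x + y) + (x ^ 2 + x * y + y ^ 2) := by
    nlinarith [sq_nonneg (x - y), sq_nonneg (x + y - 2)]
  have h5 : 0 < y - x := by linarith
  have := mul_pos h5 h4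
  linarith

lemma h_half : 0 < h (1 / 2) := by
  rw [h_eq _ (by norm_num)]
  have hs : (0:ℝ) < (1 / 2) ^ 2 := by norm_num
  have : 0 < ∫ t in (0:ℝ)..1, (Jf (3 / 2) ((1 / 2) ^ 2) t - 4 / 5 * Jf (1 / 2) ((1 / 2) ^ 2) t) := by
    apply intervalIntegral.intervalIntegral_pos_of_pos_on
      ((Jf_int _ _ hs).sub ((Jf_int _ _ hs).const_mul _)) _ zero_lt_one
    intro t ht
    have h1 : 0 < t * (1 - t) := mul_pos ht.1 (by linarith [ht.2])
    have h2 : 0 < t + (1 / 2) ^ 2 := by linarith [ht.1]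
    have q1 := Jf_succ (1 / 2) _ t h2
    have hp : 0 < Jf (3 / 2) ((1 / 2) ^ 2) t := by
      unfold Jf; positivity
    rw [show (1 / 2 + 1 : ℝ) = 3 / 2 by norm_num] at q1
    rw [← q1]
    have := ht.2
    nlinarith
  rw [intervalIntegral.integral_sub (Jf_int _ _ hs) ((Jf_int _ _ hs).const_mul _),
    intervalIntegral.integral_const_mul] at this
  change 0 < If _ _ - _ * If _ _ at this
  norm_num at this ⊢
  linarith

lemma h_nine : h (9 / 10) < 0 := by
  rw [h_eq _ (by norm_num)]
  have hs : (0:ℝ) < (9 / 10) ^ 2 := by norm_num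
  have h0 := If_pos (1 / 2) _ hs
  have : (9 / 10) ^ 2 * If (3 / 2) ((9 / 10) ^ 2) ≤ If (1 / 2) ((9 / 10) ^ 2) := by
    unfold If
    rw [← intervalIntegral.integral_const_mul]
    apply intervalIntegral.integral_mono_on zero_le_one ((Jf_int _ _ hs).const_mul _) (Jf_int _ _ hs)
    intro t ht
    have h2 : 0 < t + (9 / 10) ^ 2 := by linarith [ht.1]
    have q1 := Jf_succ (1 / 2) _ t h2
    have hp : 0 ≤ Jf (3 / 2) ((9 / 10) ^ 2) t := by
      unfold Jf; positivity
    rw [show (1 / 2 + 1 : ℝ) = 3 / 2 by norm_num] at q1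
    rw [← q1]
    have := ht.1
    nlinarith
  norm_num at this h0 ⊢
  linarith

lemma h_small : h (1 / 100) < 0 := by
  rw [h_eq _ (by norm_num)]
  have hs : (0:ℝ) < (1 / 100) ^ 2 := by norm_num
  have k1 : 4 / 25 ≤ If (1 / 2) ((1 / 100) ^ 2) := by
    have : ∫ t in (0:ℝ)..1, (24 / 25 * (t - t ^ 2)) = 4 / 25 := by
      rw [intervalIntegral.integral_const_mul, intervalIntegral.integral_sub (by simp) (by simp)]
      norm_num
    rw [← this]
    unfold If
    apply intervalIntegral.integral_mono_on zero_le_one _ (Jf_int _ _ hs)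
    · intro t ht
      have h1 : 0 ≤ t * (1 - t) := mul_nonneg ht.1 (by linarith [ht.2])
      have h2 : 0 < t + (1 / 100) ^ 2 := by linarith [ht.1]
      have h3 : t - t ^ 2 ≤ Real.sqrt (t * (1 - t)) := by
        apply Real.le_sqrt_of_sq_le
        nlinarith [ht.1, ht.2]
      have h4 : 24 / 25 ≤ (t + (1 / 100) ^ 2) ^ (-(1 / 2 : ℝ)) := by
        rw [Real.rpow_neg h2.le, ← Real.sqrt_eq_rpow]
        rw [le_inv_comm₀ (by norm_num) (Real.sqrt_pos.2 h2)]
        apply Real.sqrt_le_iff.2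
        constructor
        · norm_num
        · norm_num
          linarith [ht.2]
      unfold Jf
      have h5 : 0 ≤ t - t ^ 2 := by linarith
      nlinarith
    · apply Continuous.intervalIntegrable
      fun_prop
  have k2 : If (3 / 2) ((1 / 100) ^ 2) ≤ 10 := by
    have e : ∫ t in (0:ℝ)..1, (t + (1 / 100) ^ 2)⁻¹ ≤ 10 := by
      rw [intervalIntegral.integral_comp_add_right (fun x : ℝ => x⁻¹),
        integral_inv_of_pos (by norm_num) (by norm_num),
        Real.log_le_iff_le_exp (by norm_num)]
      have := Real.exp_one_gt_d9
      have h10 : Real.exp 10 = Real.exp 1 ^ 10 := by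
        rw [← Real.exp_nat_mul]; norm_num
      rw [h10]
      calc _ ≤ (2.7 : ℝ) ^ 10 := by norm_num
        _ ≤ _ := by gcongr; linarith
    refine le_trans ?_ e
    unfold If
    apply intervalIntegral.integral_mono_on zero_le_one (Jf_int _ _ hs)
    · apply ContinuousOn.intervalIntegrable
      rw [Set.uIcc_of_le zero_le_one]
      apply ContinuousOn.inv₀ (by fun_prop)
      intro x hx
      have := hx.1
      positivity
    · intro t ht
      have h2 : 0 < t + (1 / 100) ^ 2 := by linarith [ht.1]
      have h3 : Real.sqrt (t * (1 - t)) ≤ Real.sqrt (t + (1 / 100) ^ 2) := by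
        apply Real.sqrt_le_sqrt
        nlinarith [ht.1]
      have h4 : (t + (1 / 100) ^ 2)⁻¹
          = Real.sqrt (t + (1 / 100) ^ 2) * (t + (1 / 100) ^ 2) ^ (-(3 / 2 : ℝ)) := by
        rw [Real.sqrt_eq_rpow, ← Real.rpow_add h2, ← Real.rpow_neg_one]
        norm_num
      rw [h4]
      unfold Jf
      apply mul_le_mul_of_nonneg_right h3 (Real.rpow_nonneg h2.le _)
  norm_num at k1 k2 ⊢
  linarith

lemma W_cont (a b : ℝ) (ha : 0 < a) (hb : b < 1) : ContinuousOn Wf (Set.Icc a b) :=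
  fun x hx => (W_deriv x (by linarith [hx.1])
    (by linarith [hx.2])).continuousAt.continuousWithinAt

theorem stmt_16 :
    ∃ r₁ r₂ : ℝ, 0 < r₁ ∧ r₁ < r₂ ∧ r₂ < 1 ∧ h r₁ = 0 ∧ h r₂ = 0 ∧
      ∀ r : ℝ, 0 < r → h r = 0 → r = r₁ ∨ r = r₂ := by
  have pos : ∀ r : ℝ, r < 1 → 0 < 2 * ((1 - r) * (1 + r ^ 2)) * Real.exp (Lf r) := by
    intro r hr
    have : 0 < 1 - r := by linarith
    positivity
  have w1 : Wf (1 / 100) < 0 := by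
    have := h_small
    rw [h_W _ (by norm_num) (by norm_num)] at this
    exact neg_of_mul_neg_right this (pos _ (by norm_num)).le
  have w2 : 0 < Wf (1 / 2) := by
    have := h_half
    rw [h_W _ (by norm_num) (by norm_num)] at this
    exact pos_of_mul_pos_right this (pos _ (by norm_num)).le
  have w3 : Wf (9 / 10) < 0 := by
    have := h_nine
    rw [h_W _ (by norm_num) (by norm_num)] at this
    exact neg_of_mul_neg_right this (pos _ (by norm_num)).le
  obtain ⟨a, ha, hWa⟩ := intermediate_value_Ioo (by norm_num)
    (W_cont (1 / 100) (1 / 2) (by norm_num) (by norm_num)) ⟨w1, w2⟩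
  obtain ⟨b, hb, hWb⟩ := intermediate_value_Ioo' (by norm_num)
    (W_cont (1 / 2) (9 / 10) (by norm_num) (by norm_num)) ⟨w3, w2⟩
  obtain ⟨ha1, ha2⟩ := ha
  obtain ⟨hb1, hb2⟩ := hb
  have ha0 : 0 < a := by linarith
  have hb0 : 0 < b := by linarith
  have hab : a < b := by linarith
  have hb1' : b < 1 := by linarith
  refine ⟨a, b, ha0, hab, hb1', ?_, ?_, ?_⟩
  · rw [h_W a ha0 (by linarith), hWa, mul_zero]
  · rw [h_W b hb0 hb1', hWb, mul_zero]
  · intro r hr hh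
    by_cases hr1 : r < 1
    · rw [h_W r hr hr1] at hh
      have hW : Wf r = 0 := (mul_eq_zero.1 hh).resolve_left (pos r hr1).ne'
      by_contra! hne
      rcases lt_or_gt_of_ne hne.1 with h1 | h1
      · exact no_three r a b hr h1 hab hb1' hW hWa hWb
      · rcases lt_or_gt_of_ne hne.2 with h2 | h2
        · exact no_three a r b ha0 h1 h2 hb1' hWa hW hWb
        · exact no_three a b r ha0 hab h2 hr1 hWa hWb hW
    · exfalso
      push Not at hr1
      rw [h_eq r hr] at hh
      have hs : 0 < r ^ 2 := by positivity
      have p1 := If_pos (1 / 2) _ hs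
      have p2 := If_pos (3 / 2) _ hs
      have c0 : 0 < 1 - 3 * r + 3 * r ^ 2 := by nlinarith
      have q1 := mul_pos c0 p1
      have q2 : 0 ≤ r * ((r - 1) * (1 + r ^ 2)) * If (3 / 2) (r ^ 2) := by
        have : 0 ≤ r - 1 := by linarith
        positivity
      have q3 : 2 / r ≠ 0 := by positivity
      have := (mul_eq_zero.1 hh).resolve_left q3
      linarith
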